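/- Let a > 4 and f_a(x) = a·x·(1−x). Assume |f_a'(x)| > 1 for every x ∈ [0,1] with f_a(x) ≤ 1. Then the set Λ = {x ∈ [0,1] : for all n ∈ ℕ, f_a^[n](x) ∈ [0,1]} contains no nondegenerate interval; that is, if x, y ∈ ℝ with x < y, then the closed interval [x, y] is not contained in Λ. -/

import Mathlib

/-!
Set `θ x = arcsin √x`. On `[0, 1/2]` the map `f₄` doubles the angle, `θ (f₄ x) = 2 θ x`, and
`x ↦ 1 - x` reflects it, `θ (1 - x) = π / 2 - θ x`. Since `√(f_a x) = (√a / 2) √(f₄ x)` and `arcsin`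
is convex on `[0, 1]`, for `a ≥ 4` the map `f_a` expands the distance `|θ x - θ y|` by the factor
`√a` as long as `x` and `y` lie on the same side of the critical point `1 / 2` and
`f_a x, f_a y ≤ 1`. If `a > 4`, the critical point is mapped outside `[0, 1]`, so a connected subset
of `Λ`, as well as each of its forward images, lies on one side of it. Iterating the expansion is
only compatible with the boundedness of `θ` if that subset has at most one point.
-/

/-- The quadratic (logistic) map. -/
def logisticMap (a : ℝ) : ℝ → ℝ := fun x => a * x * (1 - x)

open Real Set

section Expansion

variable {X Y : Type*} [TopologicalSpace X] {f : X → X} {S : Set X} {g : X → Y} {c : ℝ}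

theorem pow_mul_dist_le_dist_iterate [PseudoMetricSpace Y] (hc : 0 ≤ c)
    (hf : ContinuousOn f S) (hS : MapsTo f S S)
    (hexp : ∀ t ⊆ S, IsPreconnected t → ∀ x ∈ t, ∀ y ∈ t,
      c * dist (g x) (g y) ≤ dist (g (f x)) (g (f y)))
    {t : Set X} (htS : t ⊆ S) (ht : IsPreconnected t) {x y : X} (hx : x ∈ t) (hy : y ∈ t) (n : ℕ) :
    c ^ n * dist (g x) (g y) ≤ dist (g (f^[n] x)) (g (f^[n] y)) := by
  induction n generalizing t x y with
  | zero => simp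
  | succ n ih =>
    calc c ^ (n + 1) * dist (g x) (g y) = c ^ n * (c * dist (g x) (g y)) := by ring
      _ ≤ c ^ n * dist (g (f x)) (g (f y)) := by gcongr; exact hexp t htS ht x hx y hy
      _ ≤ dist (g (f^[n + 1] x)) (g (f^[n + 1] y)) :=
        ih (hS.mono_left htS).image_subset (ht.image f (hf.mono htS))
          (mem_image_of_mem f hx) (mem_image_of_mem f hy)

theorem isTotallyDisconnected_of_mul_dist_le_dist [MetricSpace Y] (hc : 1 < c)
    (hf : ContinuousOn f S) (hS : MapsTo f S S) (hg : InjOn g S)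
    (hbdd : Bornology.IsBounded (g '' S))
    (hexp : ∀ t ⊆ S, IsPreconnected t → ∀ x ∈ t, ∀ y ∈ t,
      c * dist (g x) (g y) ≤ dist (g (f x)) (g (f y))) :
    IsTotallyDisconnected S := by
  intro t htS ht x hx y hy
  by_contra hxy
  have hpos : 0 < dist (g x) (g y) := dist_pos.2 (hg.ne (htS hx) (htS hy) hxy)
  obtain ⟨C, hC⟩ := Metric.isBounded_iff.1 hbdd
  obtain ⟨n, hn⟩ := pow_unbounded_of_one_lt (C / dist (g x) (g y)) hc
  have hmem {z : X} (hz : z ∈ t) : g (f^[n] z) ∈ g '' S :=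
    mem_image_of_mem g (hS.iterate n (htS hz))
  have hgrowth := pow_mul_dist_le_dist_iterate (zero_le_one.trans hc.le) hf hS hexp htS ht hx hy n
  exact ((div_lt_iff₀ hpos).1 hn).not_ge (hgrowth.trans (hC (hmem hx) (hmem hy)))

end Expansion

theorem mul_sub_le_sub_mul_of_convexOn {𝕜 : Type*} [Field 𝕜] [LinearOrder 𝕜]
    [IsStrictOrderedRing 𝕜] {D : Set 𝕜} {g : 𝕜 → 𝕜} (hg : ConvexOn 𝕜 D g) {c x y : 𝕜}
    (hc : 1 ≤ c) (hx₀ : 0 ≤ x) (hxy : x ≤ y) (hx : x ∈ D) (hcy : c * y ∈ D) :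
    c * (g y - g x) ≤ g (c * y) - g (c * x) := by
  rcases hxy.eq_or_lt with rfl | hxy
  · simp
  have hxcx : x ≤ c * x := le_mul_of_one_le_left hx₀ hc
  have hycy : y ≤ c * y := le_mul_of_one_le_left (hx₀.trans hxy.le) hc
  have hcxy : c * x < c * y := by gcongr
  have hy : y ∈ D := hg.1.ordConnected.out hx hcy ⟨hxy.le, hycy⟩
  have hcx : c * x ∈ D := hg.1.ordConnected.out hx hcy ⟨hxcx, hcxy.le⟩
  have hslope : (g y - g x) / (y - x) ≤ (g (c * y) - g (c * x)) / (c * y - c * x) :=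
    calc (g y - g x) / (y - x) ≤ (g (c * y) - g x) / (c * y - x) :=
          hg.secant_mono hx hy hcy hxy.ne' (hxy.trans_le hycy).ne' hycy
      _ = (g x - g (c * y)) / (x - c * y) := by rw [← neg_div_neg_eq, neg_sub, neg_sub]
      _ ≤ (g (c * x) - g (c * y)) / (c * x - c * y) :=
          hg.secant_mono hcy hx hcx (hxy.trans_le hycy).ne hcxy.ne hxcx
      _ = (g (c * y) - g (c * x)) / (c * y - c * x) := by rw [← neg_div_neg_eq, neg_sub, neg_sub]
  rw [← mul_sub, div_le_div_iff₀ (sub_pos.2 hxy) (by nlinarith)] at hslope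
  nlinarith [sub_pos.2 hxy]

theorem convexOn_arcsin_Icc : ConvexOn ℝ (Icc 0 1) arcsin := by
  refine MonotoneOn.convexOn_of_deriv (convex_Icc 0 1) continuous_arcsin.continuousOn ?_ ?_ <;>
    rw [interior_Icc]
  · exact fun x hx =>
      (differentiableAt_arcsin.2 ⟨by linarith [hx.1], hx.2.ne⟩).differentiableWithinAt
  · intro x hx y hy hxy
    have hx₀ : 0 ≤ x := hx.1.le
    have hy₁ : 0 < 1 - y ^ 2 := by nlinarith [hy.1, hy.2]
    simp only [deriv_arcsin]
    gcongr

theorem mul_dist_arcsin_le_dist_arcsin_mul {c s t : ℝ} (hc : 1 ≤ c) (hs : 0 ≤ s) (ht : 0 ≤ t)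
    (hcs : c * s ≤ 1) (hct : c * t ≤ 1) :
    c * dist (arcsin s) (arcsin t) ≤ dist (arcsin (c * s)) (arcsin (c * t)) := by
  wlog hst : s ≤ t generalizing s t
  · simpa only [dist_comm] using this ht hs hct hcs (le_of_not_ge hst)
  have hs₁ : s ≤ 1 := (le_mul_of_one_le_left hs hc).trans hcs
  rw [dist_comm, dist_comm (arcsin (c * s)), dist_eq, dist_eq,
    abs_of_nonneg (sub_nonneg.2 (monotone_arcsin hst))]
  exact (mul_sub_le_sub_mul_of_convexOn convexOn_arcsin_Icc hc hs hst ⟨hs, hs₁⟩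
    ⟨by positivity, hct⟩).trans (le_abs_self _)

theorem continuous_logisticMap (a : ℝ) : Continuous (logisticMap a) := by
  unfold logisticMap
  fun_prop

theorem logisticMap_one_sub (a x : ℝ) : logisticMap a (1 - x) = logisticMap a x := by
  unfold logisticMap
  ring

theorem sqrt_logisticMap {a : ℝ} (ha : 0 ≤ a) (x : ℝ) :
    √(logisticMap a x) = √a / 2 * √(logisticMap 4 x) := by
  have hscale : logisticMap a x = a / 2 ^ 2 * logisticMap 4 x := by
    unfold logisticMap
    ring
  rw [hscale, sqrt_mul (by positivity), sqrt_div ha, sqrt_sq zero_le_two]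

/-- The coordinate on `[0, 1]` in which `logisticMap 4` becomes the tent map on `[0, π / 2]`. -/
noncomputable def logisticAngle (x : ℝ) : ℝ := arcsin √x

theorem injOn_logisticAngle : InjOn logisticAngle (Icc 0 1) := by
  intro x hx y hy hxy
  have hmem {z : ℝ} (hz : z ∈ Icc (0 : ℝ) 1) : √z ∈ Icc (-1 : ℝ) 1 :=
    ⟨by linarith [sqrt_nonneg z], sqrt_le_one.2 hz.2⟩
  exact (sqrt_inj hx.1 hy.1).1 (injOn_arcsin (hmem hx) (hmem hy) hxy)

theorem isBounded_image_logisticAngle (s : Set ℝ) : Bornology.IsBounded (logisticAngle '' s) :=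
  (Metric.isBounded_Icc (-(π / 2)) (π / 2)).subset
    (image_subset_iff.2 fun x _ => arcsin_mem_Icc √x)

theorem logisticAngle_one_sub {x : ℝ} (hx : 0 ≤ x) :
    logisticAngle (1 - x) = π / 2 - logisticAngle x := by
  have h := arccos_eq_arcsin (sqrt_nonneg x)
  rw [sq_sqrt hx] at h
  rw [logisticAngle, logisticAngle, ← h, arccos_eq_pi_div_two_sub_arcsin]

theorem logisticAngle_le_pi_div_four {x : ℝ} (hx : x ≤ 1 / 2) : logisticAngle x ≤ π / 4 := by
  have hsqrt : √x ≤ sin (π / 4) := by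
    rw [sin_pi_div_four]
    refine sqrt_le_iff.2 ⟨by positivity, ?_⟩
    rwa [div_pow, sq_sqrt zero_le_two, show (2 : ℝ) / 2 ^ 2 = 1 / 2 by norm_num]
  exact (monotone_arcsin hsqrt).trans_eq
    (arcsin_sin (by linarith [pi_pos]) (by linarith [pi_pos]))

theorem logisticAngle_logisticMap_four {x : ℝ} (hx : x ∈ Icc (0 : ℝ) (1 / 2)) :
    logisticAngle (logisticMap 4 x) = 2 * logisticAngle x := by
  have hsin : sin (2 * logisticAngle x) = √(logisticMap 4 x) := by
    rw [sin_two_mul, logisticAngle, cos_arcsin, sq_sqrt hx.1,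
      sin_arcsin (by linarith [sqrt_nonneg x]) (sqrt_le_one.2 (by linarith [hx.2])), logisticMap,
      sqrt_mul (by linarith [hx.1]), sqrt_mul zero_le_four,
      show (4 : ℝ) = 2 ^ 2 by norm_num, sqrt_sq zero_le_two]
  have hnonneg : 0 ≤ logisticAngle x := arcsin_nonneg.2 (sqrt_nonneg x)
  exact arcsin_eq_of_sin_eq hsin
    ⟨by linarith [pi_pos], by linarith [logisticAngle_le_pi_div_four hx.2]⟩

theorem sqrt_mul_dist_logisticAngle_le_of_mem_left {a x y : ℝ} (ha : 4 ≤ a)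
    (hx : x ∈ Icc (0 : ℝ) (1 / 2)) (hy : y ∈ Icc (0 : ℝ) (1 / 2))
    (hfx : logisticMap a x ≤ 1) (hfy : logisticMap a y ≤ 1) :
    √a * dist (logisticAngle x) (logisticAngle y) ≤
      dist (logisticAngle (logisticMap a x)) (logisticAngle (logisticMap a y)) := by
  have ha₀ : 0 ≤ a := zero_le_four.trans ha
  have hc : 1 ≤ √a / 2 := by
    rw [one_le_div two_pos]
    exact le_sqrt_of_sq_le (by linarith)
  calc √a * dist (logisticAngle x) (logisticAngle y)
      = √a / 2 * dist (2 * logisticAngle x) (2 * logisticAngle y) := by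
        rw [dist_eq, dist_eq, ← mul_sub, abs_mul, abs_two]
        ring
    _ = √a / 2 * dist (arcsin √(logisticMap 4 x)) (arcsin √(logisticMap 4 y)) := by
        rw [← logisticAngle_logisticMap_four hx, ← logisticAngle_logisticMap_four hy,
          logisticAngle, logisticAngle]
    _ ≤ dist (arcsin (√a / 2 * √(logisticMap 4 x))) (arcsin (√a / 2 * √(logisticMap 4 y))) :=
        mul_dist_arcsin_le_dist_arcsin_mul hc (sqrt_nonneg _) (sqrt_nonneg _)
          (sqrt_logisticMap ha₀ x ▸ sqrt_le_one.2 hfx)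
          (sqrt_logisticMap ha₀ y ▸ sqrt_le_one.2 hfy)
    _ = dist (logisticAngle (logisticMap a x)) (logisticAngle (logisticMap a y)) := by
        rw [← sqrt_logisticMap ha₀, ← sqrt_logisticMap ha₀, logisticAngle, logisticAngle]

theorem sqrt_mul_dist_logisticAngle_le_of_mem_right {a x y : ℝ} (ha : 4 ≤ a)
    (hx : x ∈ Icc (1 / 2 : ℝ) 1) (hy : y ∈ Icc (1 / 2 : ℝ) 1)
    (hfx : logisticMap a x ≤ 1) (hfy : logisticMap a y ≤ 1) :
    √a * dist (logisticAngle x) (logisticAngle y) ≤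
      dist (logisticAngle (logisticMap a x)) (logisticAngle (logisticMap a y)) := by
  have hreflect {z : ℝ} (hz : z ∈ Icc (1 / 2 : ℝ) 1) : 1 - z ∈ Icc (0 : ℝ) (1 / 2) :=
    ⟨by linarith [hz.2], by linarith [hz.1]⟩
  have h := sqrt_mul_dist_logisticAngle_le_of_mem_left ha (hreflect hx) (hreflect hy)
    (by rwa [logisticMap_one_sub]) (by rwa [logisticMap_one_sub])
  rwa [logisticMap_one_sub, logisticMap_one_sub, logisticAngle_one_sub (by linarith [hx.1]),
    logisticAngle_one_sub (by linarith [hy.1]), dist_sub_left] at h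

/-- The set `Λ` of points of the unit interval whose forward orbit under the logistic map never
leaves the unit interval. -/
def logisticInvariantSet (a : ℝ) : Set ℝ :=
  {z : ℝ | z ∈ Icc (0 : ℝ) 1 ∧ ∀ n : ℕ, (logisticMap a)^[n] z ∈ Icc (0 : ℝ) 1}

theorem logisticInvariantSet_subset_Icc (a : ℝ) : logisticInvariantSet a ⊆ Icc 0 1 :=
  fun _ hx => hx.1

theorem mapsTo_logisticMap_logisticInvariantSet (a : ℝ) :
    MapsTo (logisticMap a) (logisticInvariantSet a) (logisticInvariantSet a) :=
  fun _ hx => ⟨hx.2 1, fun n => hx.2 (n + 1)⟩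

theorem half_notMem_logisticInvariantSet {a : ℝ} (ha : 4 < a) :
    (1 / 2 : ℝ) ∉ logisticInvariantSet a := by
  intro h
  have hle : a * (1 / 2) * (1 - 1 / 2) ≤ 1 := (h.2 1).2
  linarith

theorem subset_Iio_half_or_subset_Ioi_half {a : ℝ} (ha : 4 < a) {t : Set ℝ}
    (htS : t ⊆ logisticInvariantSet a) (ht : IsPreconnected t) :
    t ⊆ Iio (1 / 2) ∨ t ⊆ Ioi (1 / 2) := by
  refine ht.subset_or_subset isOpen_Iio isOpen_Ioi Iio_disjoint_Ioi_same ?_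
  rw [Iio_union_Ioi, subset_compl_singleton_iff]
  exact fun h => half_notMem_logisticInvariantSet ha (htS h)

theorem logistic_invariant_set_totally_disconnected_general {a : ℝ} (ha : 4 < a) :
    IsTotallyDisconnected (logisticInvariantSet a) := by
  have hsqrt : 1 < √a := lt_sqrt_of_sq_lt (by linarith)
  refine isTotallyDisconnected_of_mul_dist_le_dist hsqrt (continuous_logisticMap a).continuousOn
    (mapsTo_logisticMap_logisticInvariantSet a)
    (injOn_logisticAngle.mono (logisticInvariantSet_subset_Icc a))
    (isBounded_image_logisticAngle _) ?_
  intro t htS ht x hx y hy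
  have hfx : logisticMap a x ≤ 1 := ((htS hx).2 1).2
  have hfy : logisticMap a y ≤ 1 := ((htS hy).2 1).2
  rcases subset_Iio_half_or_subset_Ioi_half ha htS ht with hleft | hright
  · have hmem {z : ℝ} (hz : z ∈ t) : z ∈ Icc (0 : ℝ) (1 / 2) := ⟨(htS hz).1.1, (hleft hz).le⟩
    exact sqrt_mul_dist_logisticAngle_le_of_mem_left ha.le (hmem hx) (hmem hy) hfx hfy
  · have hmem {z : ℝ} (hz : z ∈ t) : z ∈ Icc (1 / 2 : ℝ) 1 := ⟨(hright hz).le, (htS hz).1.2⟩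
    exact sqrt_mul_dist_logisticAngle_le_of_mem_right ha.le (hmem hx) (hmem hy) hfx hfy

/-- For `a > 4`, if `|f_a'(x)| > 1` for every `x ∈ [0,1]` with `f_a x ≤ 1`, then the set
`Λ = {x ∈ [0,1] : ∀ n, f_a^[n] x ∈ [0,1]}` contains no nondegenerate interval. -/
theorem logistic_invariant_set_totally_disconnected (a : ℝ) (ha : 4 < a)
    (hderiv : ∀ x ∈ Set.Icc (0 : ℝ) 1, logisticMap a x ≤ 1 → 1 < |deriv (logisticMap a) x|) :
    ∀ x y : ℝ, x < y → ¬ Set.Icc x y ⊆ {z : ℝ | z ∈ Set.Icc (0 : ℝ) 1 ∧ ∀ n : ℕ,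
        (logisticMap a)^[n] z ∈ Set.Icc (0 : ℝ) 1} :=
  fun _ _ hxy hsub => hxy.ne <| logistic_invariant_set_totally_disconnected_general ha _ hsub
    isPreconnected_Icc (left_mem_Icc.2 hxy.le) (right_mem_Icc.2 hxy.le)
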